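/- Let n ≥ 4, let 2 ≤ r ≤ n/2, let 0 ≤ c ≤ 1/5, let α ∈ [0,1] and let δ be a real number with α + δ ∈ [0,1]. If δ ≥ 2c·(r/n)·α(1-α)·θ_n^(r), then c·(1 - r/n)·(α+δ)(1-α-δ)·θ_{n-1}^(r) + δ ≥ c·α(1-α)·θ_n^(r). -/

import Mathlib

/-!
Write `θ = θ_n^(r)` and split `c·α(1-α)·θ = c(1-r/n)·α(1-α)·θ + c(r/n)·α(1-α)·θ`. The hypothesis on
`δ` bounds the second term by `δ/2`. In the first term, `x(1-x)` is `1`-Lipschitz on `[0, 1]`, so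
moving from `α` to `α + δ` costs at most `c(1-r/n)θ·δ`. This is again at most `δ/2` as soon as
`2c ≤ √r`, because `(1-r/n)θ ≤ 1/√r`. Finally `θ_n^(r) ≤ θ_{n-1}^(r)`.
-/

/-- The number `θ_m^(k) = √(m/(k(m-k)))`, for real `m` and `k`; it is meaningful for `0 < k < m`. -/
noncomputable def theta (m k : ℝ) : ℝ := √(m / (k * (m - k)))

namespace theta

lemma nonneg (m k : ℝ) : 0 ≤ theta m k := Real.sqrt_nonneg _

lemma antitoneOn {k : ℝ} (hk : 0 < k) : AntitoneOn (theta · k) (Set.Ioi k) := by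
  intro m hm m' hm' hmm'
  have hmk : 0 < m - k := sub_pos.2 hm
  have hmk' : 0 < m' - k := sub_pos.2 hm'
  refine Real.sqrt_le_sqrt ?_
  rw [div_le_div_iff₀ (by positivity) (by positivity)]
  have hcross : m' * (m - k) ≤ m * (m' - k) := by nlinarith
  nlinarith

lemma sqrt_mul_one_sub_div_mul {m k : ℝ} (hk : 0 < k) (hkm : k < m) :
    √k * ((1 - k / m) * theta m k) = √(1 - k / m) := by
  have hm : 0 < m := hk.trans hkm
  have hmk : 0 < m - k := sub_pos.2 hkm
  have hq : 0 ≤ 1 - k / m := by rw [one_sub_div hm.ne']; positivity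
  calc √k * ((1 - k / m) * theta m k)
      = √k * (√((1 - k / m) ^ 2) * √(m / (k * (m - k)))) := by rw [Real.sqrt_sq hq, theta]
    _ = √(k * ((1 - k / m) ^ 2 * (m / (k * (m - k))))) := by
      rw [Real.sqrt_mul hk.le, Real.sqrt_mul (sq_nonneg _)]
    _ = √(1 - k / m) := by congr 1; field_simp

lemma mul_one_sub_div_mul_le_half {m k c : ℝ} (hk : 0 < k) (hkm : k < m) (hc : 2 * c ≤ √k) :
    c * (1 - k / m) * theta m k ≤ 1 / 2 := by
  have hm : 0 < m := hk.trans hkm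
  have hq : 0 ≤ 1 - k / m := sub_nonneg.2 ((div_le_one hm).2 hkm.le)
  have hsqrt : √(1 - k / m) ≤ 1 := Real.sqrt_le_one.2 (sub_le_self 1 (by positivity))
  have hmul := mul_le_mul_of_nonneg_right hc (mul_nonneg hq (nonneg m k))
  rw [sqrt_mul_one_sub_div_mul hk hkm] at hmul
  linarith

end theta

lemma mul_one_sub_le_add_mul_one_sub_add {x d : ℝ} (hd : 0 ≤ d) (hxd : x + d ≤ 1) :
    x * (1 - x) ≤ (x + d) * (1 - x - d) + d := by
  have hslope : 0 ≤ d * ((1 - x) + (1 - x - d)) := mul_nonneg hd (by linarith)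
  linarith

theorem stmt_4_general {n r c α δ : ℝ} (hr : 0 < r) (hrn : r + 1 < n)
    (hc0 : 0 ≤ c) (hc : 2 * c ≤ √r) (hα : α ≤ 1) (hαδ : α + δ ∈ Set.Icc (0 : ℝ) 1)
    (hδ : 2 * c * (r / n) * (α * (1 - α)) * theta n r ≤ δ) :
    c * (α * (1 - α)) * theta n r
      ≤ c * (1 - r / n) * ((α + δ) * (1 - α - δ)) * theta (n - 1) r + δ := by
  obtain ⟨hαδ0, hαδ1⟩ := hαδ
  have hn : 0 < n := by linarith
  have hθ := theta.nonneg n r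
  have hq : 0 ≤ 1 - r / n := sub_nonneg.2 ((div_le_one hn).2 (by linarith))
  have hδ0 : 0 ≤ δ := by
    rcases le_total 0 α with hα0 | hα0
    · have : 0 ≤ 1 - α := sub_nonneg.2 hα
      exact le_trans (by positivity) hδ
    · linarith
  have hhalf : c * (1 - r / n) * theta n r ≤ 1 / 2 :=
    theta.mul_one_sub_div_mul_le_half hr (by linarith) hc
  have hmono : theta n r ≤ theta (n - 1) r :=
    theta.antitoneOn hr (Set.mem_Ioi.2 (by linarith)) (Set.mem_Ioi.2 (by linarith)) (by linarith)
  have hβ : 0 ≤ (α + δ) * (1 - α - δ) := mul_nonneg hαδ0 (by linarith)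
  calc c * (α * (1 - α)) * theta n r
      = c * (1 - r / n) * theta n r * (α * (1 - α))
          + c * (r / n) * (α * (1 - α)) * theta n r := by ring
    _ ≤ c * (1 - r / n) * theta n r * ((α + δ) * (1 - α - δ) + δ) + δ / 2 := by
      gcongr
      · exact mul_one_sub_le_add_mul_one_sub_add hδ0 hαδ1
      · linarith
    _ = c * (1 - r / n) * ((α + δ) * (1 - α - δ)) * theta n r
          + (c * (1 - r / n) * theta n r * δ + δ / 2) := by ring
    _ ≤ c * (1 - r / n) * ((α + δ) * (1 - α - δ)) * theta (n - 1) r + (1 / 2 * δ + δ / 2) := by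
      gcongr
    _ = c * (1 - r / n) * ((α + δ) * (1 - α - δ)) * theta (n - 1) r + δ := by ring

/-- Claim 3.2 of the paper: if `δ ≥ 2c·(r/n)·α(1-α)·θ_n^(r)`, then
`c·(1-r/n)·(α+δ)(1-α-δ)·θ_{n-1}^(r) + δ ≥ c·α(1-α)·θ_n^(r)`,
where `θ_m^(k) = √(m/(k(m-k)))`. -/
theorem stmt_4 (n r : ℕ) (hn : 4 ≤ n) (hr2 : 2 ≤ r) (hrn : 2 * r ≤ n)
    (c α δ : ℝ) (hc0 : 0 ≤ c) (hc : c ≤ 1 / 5)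
    (hα : α ∈ Set.Icc (0 : ℝ) 1) (hαδ : α + δ ∈ Set.Icc (0 : ℝ) 1)
    (hδ : δ ≥ 2 * c * ((r : ℝ) / n) * (α * (1 - α))
        * Real.sqrt ((n : ℝ) / ((r : ℝ) * ((n : ℝ) - r)))) :
    c * (1 - (r : ℝ) / n) * ((α + δ) * (1 - α - δ))
        * Real.sqrt (((n : ℝ) - 1) / ((r : ℝ) * ((n : ℝ) - 1 - r))) + δ
      ≥ c * (α * (1 - α)) * Real.sqrt ((n : ℝ) / ((r : ℝ) * ((n : ℝ) - r))) := by
  have hr : (2 : ℝ) ≤ r := by exact_mod_cast hr2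
  have hrn' : (2 : ℝ) * r ≤ n := by exact_mod_cast hrn
  have hsqrt : 1 ≤ √(r : ℝ) := Real.one_le_sqrt.2 (by linarith)
  exact stmt_4_general (by linarith) (by linarith) hc0 (by linarith) hα.2 hαδ hδ
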